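/- arXiv:1004.1854 — 4 statements merged into one kernel-verified Lean document; each statement's English description precedes it below -/
import Mathlib

section
/- Consider a network contribution game in which every reward function f_e is coordinate-concave, i.e., for every fixed value of one argument, f_e is a concave function of the other argument. Then every pairwise equilibrium s satisfies w(s*) ≤ 2·w(s) for every state s*; i.e., the price of anarchy for pairwise equilibria is at most 2. -/
open Finset

/-- A network contribution game on a finite simple undirected graph. -/
structure NCGame (V : Type) [Fintype V] [DecidableEq V] where
  /-- adjacency relation of the (simple, undirected) graph -/
  Adj : V → V → Prop
  adj_symm : ∀ u v, Adj u v → Adj v u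
  adj_irrefl : ∀ v, ¬ Adj v v
  /-- budget of each player -/
  B : V → ℝ
  B_nonneg : ∀ v, 0 ≤ B v
  /-- reward function of each edge; `f u v x y` is the reward of edge `(u,v)`
  when `u` contributes `x` and `v` contributes `y`. -/
  f : V → V → ℝ → ℝ → ℝ
  f_comm : ∀ u v x y, f u v x y = f v u x y
  f_symm : ∀ u v x y, f u v x y = f u v y x
  f_nonneg : ∀ u v x y, 0 ≤ x → 0 ≤ y → 0 ≤ f u v x y
  f_mono : ∀ u v y, 0 ≤ y → MonotoneOn (fun x => f u v x y) (Set.Ici 0)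

variable {V : Type} [Fintype V] [DecidableEq V]

/-- A state: `s v u` is the effort player `v` puts on the edge `(v,u)`.
It is valid if efforts are nonnegative, supported on edges, and within budget. -/
def validState (g : NCGame V) (s : V → V → ℝ) : Prop :=
  (∀ v u, 0 ≤ s v u) ∧ (∀ v u, ¬ g.Adj v u → s v u = 0) ∧
  (∀ v, ∑ u, s v u ≤ g.B v)

open Classical in
/-- utility of player `v` -/
noncomputable def util (g : NCGame V) (s : V → V → ℝ) (v : V) : ℝ :=
  ∑ u, if g.Adj v u then g.f v u (s v u) (s u v) else 0

/-- social welfare -/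
noncomputable def welfare (g : NCGame V) (s : V → V → ℝ) : ℝ :=
  ∑ v, util g s v

/-- Nash equilibrium: no unilateral improving deviation. -/
def IsNashEq (g : NCGame V) (s : V → V → ℝ) : Prop :=
  validState g s ∧
  ∀ v (t : V → ℝ), validState g (Function.update s v t) →
    util g (Function.update s v t) v ≤ util g s v

/-- Pairwise equilibrium: Nash and no bilateral improving deviation. -/
def IsPairwiseEq (g : NCGame V) (s : V → V → ℝ) : Prop :=
  IsNashEq g s ∧
  ∀ u v (tu tv : V → ℝ), u ≠ v →
    validState g (Function.update (Function.update s u tu) v tv) →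
    ¬(util g s u < util g (Function.update (Function.update s u tu) v tv) u ∧
      util g s v < util g (Function.update (Function.update s u tu) v tv) v)

/-- Strong equilibrium: no coalition has a joint deviation strictly improving
the utility of all its members. -/
def IsStrongEq (g : NCGame V) (s : V → V → ℝ) : Prop :=
  validState g s ∧
  ∀ (C : Finset V) (s' : V → V → ℝ), C.Nonempty → validState g s' →
    (∀ v, v ∉ C → s' v = s v) →
    ∃ v ∈ C, util g s' v ≤ util g s v

/-- class `C`: symmetric, nonnegative, nondecreasing, coordinate-convex. -/
def InClassC (f : ℝ → ℝ → ℝ) : Prop :=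
  (∀ x y, 0 ≤ x → 0 ≤ y → 0 ≤ f x y) ∧
  (∀ x y, f x y = f y x) ∧
  (∀ y, 0 ≤ y → MonotoneOn (fun x => f x y) (Set.Ici 0)) ∧
  (∀ y, 0 ≤ y → ConvexOn ℝ (Set.Ici 0) (fun x => f x y))

/-- class `C₀`: members of `C` vanishing when one argument is `0`. -/
def InClassC0 (f : ℝ → ℝ → ℝ) : Prop :=
  InClassC f ∧ ∀ x, 0 ≤ x → f x 0 = 0

/-- An edge is tight in `s` if both endpoints contribute `0` or their full budget. -/
def tightState (g : NCGame V) (s : V → V → ℝ) : Prop :=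
  ∀ u v, g.Adj u v → s u v = 0 ∨ s u v = g.B u

/-!
Let `s` be a pairwise equilibrium and `r` any valid state. For an edge `uv`, let both endpoints
raise their effort on `uv` to the maximum of their efforts in `s` and `r`, where `u` pays by moving
its efforts a fraction `λ_uv` of the way from `s` down to `s ⊓ r`; here `λ_uv` is the share of `uv`
in the total effort that `u` would have to add to reach `s ⊔ r`. By concavity this costs `u` at most
`λ_uv` times its loss `L_u` from curtailing all its efforts to `s ⊓ r`. As the deviation is not
profitable for both players, the reward of `uv` rises by at most `λ_uv L_u + λ_vu L_v`. The shares
of a player sum to at most `1`, so summing over ordered pairs gives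
`w(s ⊔ r) - w(s) ≤ 2 ∑ L_u`. On the other hand, monotonicity and nonnegativity of the rewards give
`w(r) + w(s) ≤ w(s ⊔ r) + 2 (w(s) - ∑ L_u)`, edge by edge. Add the two inequalities.
-/

namespace NCGame

section GeneralInequalities

theorem concaveOn_finset_sum {𝕜 E β ι : Type*} [Semiring 𝕜] [PartialOrder 𝕜]
    [AddCommMonoid E] [SMul 𝕜 E] [AddCommMonoid β] [PartialOrder β] [IsOrderedAddMonoid β]
    [Module 𝕜 β] {C : Set E} (hC : Convex 𝕜 C) {I : Finset ι} {F : ι → E → β}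
    (hF : ∀ i ∈ I, ConcaveOn 𝕜 C (F i)) : ConcaveOn 𝕜 C (fun x => ∑ i ∈ I, F i x) := by
  simpa only [← Finset.sum_apply] using
    Finset.sum_induction F (ConcaveOn 𝕜 C) (fun _ _ => ConcaveOn.add) (concaveOn_const 0 hC) hF

theorem add_le_sup_add_inf_add_inf {α β M : Type*} [LinearOrder α] [LinearOrder β]
    [AddCommMonoid M] [PartialOrder M] [IsOrderedAddMonoid M] {F : α → β → M}
    {S : Set α} {T : Set β} (hF_left : ∀ y ∈ T, MonotoneOn (fun x => F x y) S)
    (hF_right : ∀ x ∈ S, MonotoneOn (F x) T) (hF₀ : ∀ x ∈ S, ∀ y ∈ T, 0 ≤ F x y)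
    {x x' : α} {y y' : β} (hx : x ∈ S) (hx' : x' ∈ S) (hy : y ∈ T) (hy' : y' ∈ T) :
    F x' y' + F x y ≤ F (x ⊔ x') (y ⊔ y') + F (x ⊓ x') y + F x (y ⊓ y') := by
  have mono_left (h : x' ≤ x) : F x' y' ≤ F x y' := hF_left y' hy' hx' hx h
  have mono_right (h : y' ≤ y) : F x' y' ≤ F x' y := hF_right x' hx' hy' hy h
  rcases le_total x x' with hxx' | hxx' <;> rcases le_total y y' with hyy' | hyy' <;>
    simp only [sup_of_le_left, sup_of_le_right, inf_of_le_left, inf_of_le_right, hxx', hyy']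
  · exact le_add_of_nonneg_right (hF₀ x hx y hy)
  · exact (add_le_add_left (mono_right hyy') _).trans (le_add_of_nonneg_right (hF₀ x hx y' hy'))
  · rw [add_assoc]
    exact add_le_add (mono_left hxx') (le_add_of_nonneg_left (hF₀ x' hx' y hy))
  · rw [add_comm (F x' y')]
    exact (add_le_add_right (mono_right hyy') _).trans (le_add_of_nonneg_right (hF₀ x hx y' hy'))

theorem sup_sub_left_nonneg {G : Type*} [AddGroup G] [Lattice G] [AddRightMono G] (a b : G) :
    0 ≤ a ⊔ b - a :=
  sub_nonneg.2 le_sup_left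

end GeneralInequalities

section Reallocation

variable {ι 𝕜 : Type*} [Fintype ι] [Field 𝕜] [LinearOrder 𝕜] {a b : ι → 𝕜}

/-- The share of coordinate `i` in the total increase from `a` to `a ⊔ b`. It is `0` for every `i`
if `b ≤ a`, by the convention `x / 0 = 0`. -/
def increaseShare (a b : ι → 𝕜) (i : ι) : 𝕜 :=
  (a ⊔ b - a) i / ∑ j, (a ⊔ b - a) j

/-- The vector `a` moved towards `a ⊓ b` by the fraction `increaseShare a b i`: the effort that a
player gives up in order to raise coordinate `i`. -/
def release (a b : ι → 𝕜) (i : ι) : ι → 𝕜 :=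
  (1 - increaseShare a b i) • a + increaseShare a b i • (a ⊓ b)

/-- The reallocation of `a` that raises coordinate `i` to its value in `a ⊔ b`, financed by
`release a b i`. -/
def redirect [DecidableEq ι] (a b : ι → 𝕜) (i : ι) : ι → 𝕜 :=
  release a b i + Pi.single i ((a ⊔ b - a) i)

theorem increaseShare_eq_zero_of_le {i : ι} (h : b i ≤ a i) : increaseShare a b i = 0 := by
  simp [increaseShare, h]

theorem release_self (a b : ι → 𝕜) (i : ι) : release a b i i = a i := by
  rcases le_total (a i) (b i) with h | h
  · simp [release, h, ← add_mul]
  · simp [release, increaseShare_eq_zero_of_le h]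

theorem redirect_self [DecidableEq ι] (a b : ι → 𝕜) (i : ι) :
    redirect a b i i = (a ⊔ b) i := by
  simp [redirect, release_self]

theorem redirect_of_ne [DecidableEq ι] (a b : ι → 𝕜) {i j : ι} (h : j ≠ i) :
    redirect a b i j = release a b i j := by
  simp [redirect, h]

variable [IsStrictOrderedRing 𝕜]

theorem increaseShare_nonneg (a b : ι → 𝕜) (i : ι) : 0 ≤ increaseShare a b i :=
  div_nonneg (sup_sub_left_nonneg a b i) (sum_nonneg fun j _ => sup_sub_left_nonneg a b j)

theorem sum_increaseShare_le_one (a b : ι → 𝕜) : ∑ i, increaseShare a b i ≤ 1 := by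
  simp only [increaseShare, ← sum_div]
  exact div_self_le_one _

theorem increaseShare_le_one (a b : ι → 𝕜) (i : ι) : increaseShare a b i ≤ 1 :=
  (single_le_sum (fun j _ => increaseShare_nonneg a b j) (mem_univ i)).trans
    (sum_increaseShare_le_one a b)

theorem increaseShare_mul_sum (a b : ι → 𝕜) (i : ι) :
    increaseShare a b i * ∑ j, (a ⊔ b - a) j = (a ⊔ b - a) i :=
  div_mul_cancel_of_imp fun h =>
    (sum_eq_zero_iff_of_nonneg fun j _ => sup_sub_left_nonneg a b j).1 h i (mem_univ i)

variable [DecidableEq ι]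

theorem redirect_nonneg (ha : 0 ≤ a) (hb : 0 ≤ b) (i : ι) : 0 ≤ redirect a b i := by
  have hkept : 0 ≤ 1 - increaseShare a b i := sub_nonneg.2 (increaseShare_le_one a b i)
  exact add_nonneg
    (add_nonneg (smul_nonneg hkept ha) (smul_nonneg (increaseShare_nonneg a b i) (le_inf ha hb)))
    (Pi.single_nonneg.2 (sup_sub_left_nonneg a b i))

theorem sum_redirect (a b : ι → 𝕜) (i : ι) :
    ∑ j, redirect a b i j
      = (1 - increaseShare a b i) * ∑ j, a j + increaseShare a b i * ∑ j, b j := by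
  have hinf_add_increase (j : ι) : (a ⊓ b) j + (a ⊔ b - a) j = b j := by
    simp only [Pi.inf_apply, Pi.sub_apply, Pi.sup_apply, ← add_sub_assoc, inf_add_sup,
      add_sub_cancel_left]
  calc ∑ j, redirect a b i j
      = (1 - increaseShare a b i) * ∑ j, a j + increaseShare a b i * ∑ j, (a ⊓ b) j
          + (a ⊔ b - a) i := by
        simp only [redirect, release, Pi.add_apply, Pi.smul_apply, smul_eq_mul, sum_add_distrib,
          ← mul_sum, sum_pi_single', mem_univ, if_true]
    _ = _ := by
        rw [← increaseShare_mul_sum a b i, add_assoc, ← mul_add, ← sum_add_distrib,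
          sum_congr rfl fun j _ => hinf_add_increase j]

end Reallocation

section States

variable {ι α : Type*} [DecidableEq ι]

/-- The state in which player `u` alone lowers its efforts in `s` to at most those in `r`. -/
def curtail [Min α] (s r : ι → ι → α) (u : ι) : ι → ι → α :=
  Function.update s u (s u ⊓ r u)

/-- The state in which `u` and `v` both redirect efforts in `s` towards their common edge, aiming
at `r`. -/
noncomputable def jointRedirect [Fintype ι] (s r : ι → ι → ℝ) (u v : ι) : ι → ι → ℝ :=
  Function.update (Function.update s u (redirect (s u) (r u) v)) v (redirect (s v) (r v) u)

end States

/-- Membership of `t` in the strategy space of player `v`. -/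
def IsStrategy (g : NCGame V) (v : V) (t : V → ℝ) : Prop :=
  0 ≤ t ∧ (∀ u, ¬ g.Adj v u → t u = 0) ∧ ∑ u, t u ≤ g.B v

/-- Coordinate-concavity of all reward functions. One argument suffices, as rewards are
symmetric. -/
def IsCoordinateConcave (g : NCGame V) : Prop :=
  ∀ u v, g.Adj u v → ∀ y, 0 ≤ y → ConcaveOn ℝ (Set.Ici 0) (fun x => g.f u v x y)

/-- Stability of `s` against joint deviations of two players that profit both. Unilateral
deviations are not considered. -/
def IsBilaterallyStable (g : NCGame V) (s : V → V → ℝ) : Prop :=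
  ∀ u v (tu tv : V → ℝ), u ≠ v →
    validState g (Function.update (Function.update s u tu) v tv) →
    ¬(util g s u < util g (Function.update (Function.update s u tu) v tv) u ∧
      util g s v < util g (Function.update (Function.update s u tu) v tv) v)

open Classical in
/-- The reward that `u` receives from its edge to `v`, extended by `0` to non-adjacent pairs. -/
noncomputable def edgeReward (g : NCGame V) (s : V → V → ℝ) (u v : V) : ℝ :=
  if g.Adj u v then g.f u v (s u v) (s v u) else 0

/-- The utility that `u` loses by curtailing its efforts in `s` to those in `r`. -/
noncomputable def curtailLoss (g : NCGame V) (s r : V → V → ℝ) (u : V) : ℝ :=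
  util g s u - util g (curtail s r u) u

variable {g : NCGame V} {s r : V → V → ℝ} {u v : V}

theorem Adj.ne (h : g.Adj u v) : u ≠ v := by
  rintro rfl
  exact g.adj_irrefl u h

theorem monotoneOn_f_right (g : NCGame V) (u v : V) {x : ℝ} (hx : 0 ≤ x) :
    MonotoneOn (g.f u v x) (Set.Ici 0) := by
  rw [show g.f u v x = fun y => g.f u v y x from funext (g.f_symm u v x)]
  exact g.f_mono u v x hx

section Validity

theorem validState_iff_forall_isStrategy :
    validState g s ↔ ∀ v, IsStrategy g v (s v) := by
  simp only [validState, IsStrategy, forall_and, Pi.le_def, Pi.zero_apply]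

theorem validState_update (hs : validState g s) {t : V → ℝ} (ht : IsStrategy g v t) :
    validState g (Function.update s v t) := by
  rw [validState_iff_forall_isStrategy] at hs ⊢
  exact (Function.forall_update_iff s (IsStrategy g)).2 ⟨ht, fun u _ => hs u⟩

theorem isStrategy_redirect {a b : V → ℝ} (ha : IsStrategy g u a) (hb : IsStrategy g u b)
    (huv : g.Adj u v) : IsStrategy g u (redirect a b v) := by
  obtain ⟨ha₀, ha_supp, ha_sum⟩ := ha
  obtain ⟨hb₀, hb_supp, hb_sum⟩ := hb
  refine ⟨redirect_nonneg ha₀ hb₀ v, fun x hx => ?_, ?_⟩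
  · have hxv : x ≠ v := by
      rintro rfl
      exact hx huv
    simp [redirect_of_ne a b hxv, release, ha_supp x hx, hb_supp x hx]
  · rw [sum_redirect]
    exact convex_Iic (g.B u) ha_sum hb_sum (sub_nonneg.2 (increaseShare_le_one a b v))
      (increaseShare_nonneg a b v) (sub_add_cancel _ _)

theorem validState_jointRedirect (hs : validState g s) (hr : validState g r)
    (huv : g.Adj u v) : validState g (jointRedirect s r u v) := by
  have hs' := validState_iff_forall_isStrategy.1 hs
  have hr' := validState_iff_forall_isStrategy.1 hr
  exact validState_update
    (validState_update hs (isStrategy_redirect (hs' u) (hr' u) huv))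
    (isStrategy_redirect (hs' v) (hr' v) (g.adj_symm u v huv))

end Validity

section EdgeReward

theorem edgeReward_of_adj (h : g.Adj u v) (s : V → V → ℝ) :
    edgeReward g s u v = g.f u v (s u v) (s v u) :=
  if_pos h

theorem edgeReward_of_not_adj (h : ¬ g.Adj u v) (s : V → V → ℝ) : edgeReward g s u v = 0 :=
  if_neg h

theorem util_eq_sum_edgeReward (g : NCGame V) (s : V → V → ℝ) (u : V) :
    util g s u = ∑ v, edgeReward g s u v :=
  rfl

theorem welfare_eq_sum_edgeReward (g : NCGame V) (s : V → V → ℝ) :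
    welfare g s = ∑ u, ∑ v, edgeReward g s u v :=
  rfl

theorem edgeReward_comm (g : NCGame V) (s : V → V → ℝ) (u v : V) :
    edgeReward g s u v = edgeReward g s v u := by
  by_cases h : g.Adj u v
  · rw [edgeReward_of_adj h, edgeReward_of_adj (g.adj_symm u v h), g.f_comm, g.f_symm]
  · rw [edgeReward_of_not_adj h, edgeReward_of_not_adj fun h' => h (g.adj_symm v u h')]

theorem edgeReward_congr (huv : s u v = r u v) (hvu : s v u = r v u) :
    edgeReward g s u v = edgeReward g r u v := by
  simp only [edgeReward, huv, hvu]

theorem edgeReward_mono (hs : 0 ≤ s) (hsr : s ≤ r) (u v : V) :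
    edgeReward g s u v ≤ edgeReward g r u v := by
  by_cases h : g.Adj u v
  · simp only [edgeReward_of_adj h]
    have hr : 0 ≤ r := hs.trans hsr
    calc g.f u v (s u v) (s v u)
        ≤ g.f u v (r u v) (s v u) := g.f_mono u v _ (hs v u) (hs u v) (hr u v) (hsr u v)
      _ ≤ g.f u v (r u v) (r v u) := monotoneOn_f_right g u v (hr u v) (hs v u) (hr v u) (hsr v u)
  · simp only [edgeReward_of_not_adj h, le_refl]

theorem concaveOn_edgeReward_update (hg : IsCoordinateConcave g) (hs : 0 ≤ s) (u v : V) :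
    ConcaveOn ℝ (Set.Ici 0) (fun t => edgeReward g (Function.update s u t) u v) := by
  by_cases h : g.Adj u v
  · simp only [edgeReward_of_adj h, Function.update_self, Function.update_of_ne h.ne.symm]
    exact ((hg u v h (s v u) (hs v u)).comp_linearMap
      (LinearMap.proj v : (V → ℝ) →ₗ[ℝ] ℝ)).subset (fun _ ht => ht v) (convex_Ici 0)
  · simp only [edgeReward_of_not_adj h]
    exact concaveOn_const 0 (convex_Ici 0)

theorem edgeReward_add_le (hs : 0 ≤ s) (hr : 0 ≤ r) (u v : V) :
    edgeReward g r u v + edgeReward g s u v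
      ≤ edgeReward g (s ⊔ r) u v + edgeReward g (curtail s r u) u v
        + edgeReward g (curtail s r v) u v := by
  by_cases h : g.Adj u v
  · simp only [edgeReward_of_adj h, curtail, Function.update_self,
      Function.update_of_ne h.ne, Function.update_of_ne h.ne.symm]
    exact add_le_sup_add_inf_add_inf (g.f_mono u v) (fun _ => monotoneOn_f_right g u v)
      (fun x hx y hy => g.f_nonneg u v x y hx hy) (hs u v) (hr u v) (hs v u) (hr v u)
  · simp only [edgeReward_of_not_adj h, add_zero, le_refl]

end EdgeReward

section Utility

theorem util_sub_util_of_edgeReward_eq (h : ∀ x ≠ v, edgeReward g s u x = edgeReward g r u x) :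
    util g s u - util g r u = edgeReward g s u v - edgeReward g r u v := by
  rw [util_eq_sum_edgeReward, util_eq_sum_edgeReward, ← sum_sub_distrib]
  exact Fintype.sum_eq_single v fun x hx => sub_eq_zero.2 (h x hx)

theorem concaveOn_util_update (hg : IsCoordinateConcave g) (hs : 0 ≤ s) (u : V) :
    ConcaveOn ℝ (Set.Ici 0) (fun t => util g (Function.update s u t) u) :=
  concaveOn_finset_sum (convex_Ici 0) fun v _ => concaveOn_edgeReward_update hg hs u v

theorem curtailLoss_nonneg (hs : 0 ≤ s) (hr : 0 ≤ r) (u : V) : 0 ≤ curtailLoss g s r u := by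
  have hcurtail_nonneg : 0 ≤ curtail s r u :=
    (Function.forall_update_iff s fun _ t => 0 ≤ t).2 ⟨le_inf (hs u) (hr u), fun x _ => hs x⟩
  have hcurtail_le : curtail s r u ≤ s := update_le_self_iff.2 inf_le_left
  exact sub_nonneg.2 (sum_le_sum fun v _ => edgeReward_mono hcurtail_nonneg hcurtail_le u v)

theorem util_sub_util_release_le (hg : IsCoordinateConcave g) (hs : 0 ≤ s) (hr : 0 ≤ r)
    (u v : V) :
    util g s u - util g (Function.update s u (release (s u) (r u) v)) u
      ≤ increaseShare (s u) (r u) v * curtailLoss g s r u := by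
  have hconcave := (concaveOn_util_update hg hs u).2 (hs u) (le_inf (hs u) (hr u))
    (sub_nonneg.2 (increaseShare_le_one (s u) (r u) v)) (increaseShare_nonneg (s u) (r u) v)
    (sub_add_cancel _ _)
  simp only [Function.update_eq_self, smul_eq_mul] at hconcave
  simp only [curtailLoss, curtail, release]
  linarith

theorem jointRedirect_comm (h : u ≠ v) (s r : V → V → ℝ) :
    jointRedirect s r u v = jointRedirect s r v u :=
  Function.update_comm h _ _ _

theorem util_jointRedirect_sub_util_release (h : u ≠ v) (s r : V → V → ℝ) :
    util g (jointRedirect s r u v) u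
        - util g (Function.update s u (release (s u) (r u) v)) u
      = edgeReward g (s ⊔ r) u v - edgeReward g s u v := by
  have hoff (x : V) (hx : x ≠ v) : edgeReward g (jointRedirect s r u v) u x
      = edgeReward g (Function.update s u (release (s u) (r u) v)) u x := by
    rcases eq_or_ne x u with rfl | hxu
    · simp only [edgeReward_of_not_adj (g.adj_irrefl x)]
    · exact edgeReward_congr (by simp [jointRedirect, h, redirect_of_ne _ _ hx])
        (by simp [jointRedirect, hx, hxu])
  rw [util_sub_util_of_edgeReward_eq hoff]
  congr 1
  · exact edgeReward_congr (by simp [jointRedirect, h, redirect_self])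
      (by simp [jointRedirect, redirect_self])
  · exact edgeReward_congr (by simp [release_self]) (by simp [h.symm])

theorem edgeReward_sup_sub_le_util_jointRedirect (hg : IsCoordinateConcave g) (hs : 0 ≤ s)
    (hr : 0 ≤ r) (h : u ≠ v) :
    edgeReward g (s ⊔ r) u v - edgeReward g s u v
      ≤ util g (jointRedirect s r u v) u - util g s u
        + increaseShare (s u) (r u) v * curtailLoss g s r u := by
  linarith [util_jointRedirect_sub_util_release (g := g) h s r,
    util_sub_util_release_le hg hs hr u v]

end Utility

section Welfare

theorem welfare_add_le (hs : 0 ≤ s) (hr : 0 ≤ r) :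
    welfare g r + welfare g s ≤ welfare g (s ⊔ r) + 2 * ∑ u, util g (curtail s r u) u := by
  have hswap : ∑ u, ∑ v, edgeReward g (curtail s r v) u v = ∑ v, util g (curtail s r v) v := by
    rw [sum_comm]
    exact sum_congr rfl fun v _ => sum_congr rfl fun u _ => edgeReward_comm g _ u v
  calc welfare g r + welfare g s
      = ∑ u, ∑ v, (edgeReward g r u v + edgeReward g s u v) := by
        simp only [welfare_eq_sum_edgeReward, sum_add_distrib]
    _ ≤ ∑ u, ∑ v, (edgeReward g (s ⊔ r) u v + edgeReward g (curtail s r u) u v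
          + edgeReward g (curtail s r v) u v) :=
        sum_le_sum fun u _ => sum_le_sum fun v _ => edgeReward_add_le hs hr u v
    _ = welfare g (s ⊔ r) + 2 * ∑ u, util g (curtail s r u) u := by
        simp only [sum_add_distrib, hswap, ← util_eq_sum_edgeReward, welfare]
        ring

theorem edgeReward_sup_sub_le (hg : IsCoordinateConcave g) (hs : validState g s)
    (hstable : IsBilaterallyStable g s) (hr : validState g r) (u v : V) :
    edgeReward g (s ⊔ r) u v - edgeReward g s u v
      ≤ increaseShare (s u) (r u) v * curtailLoss g s r u
        + increaseShare (s v) (r v) u * curtailLoss g s r v := by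
  have hcost (x y : V) : 0 ≤ increaseShare (s x) (r x) y * curtailLoss g s r x :=
    mul_nonneg (increaseShare_nonneg (s x) (r x) y) (curtailLoss_nonneg hs.1 hr.1 x)
  by_cases huv : g.Adj u v
  · have hu := edgeReward_sup_sub_le_util_jointRedirect hg hs.1 hr.1 huv.ne
    have hv := edgeReward_sup_sub_le_util_jointRedirect hg hs.1 hr.1 huv.ne.symm
    rw [← jointRedirect_comm huv.ne, edgeReward_comm g _ v u,
      edgeReward_comm g _ v u] at hv
    by_contra! hgain
    have hu_profits : util g s u < util g (jointRedirect s r u v) u := by linarith [hcost v u]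
    have hv_profits : util g s v < util g (jointRedirect s r u v) v := by linarith [hcost u v]
    exact hstable u v _ _ huv.ne (validState_jointRedirect hs hr huv) ⟨hu_profits, hv_profits⟩
  · simp only [edgeReward_of_not_adj huv, sub_zero]
    exact add_nonneg (hcost u v) (hcost v u)

theorem welfare_sup_sub_le (hg : IsCoordinateConcave g) (hs : validState g s)
    (hstable : IsBilaterallyStable g s) (hr : validState g r) :
    welfare g (s ⊔ r) - welfare g s ≤ 2 * ∑ u, curtailLoss g s r u := by
  have hshares : ∑ u, ∑ v, increaseShare (s u) (r u) v * curtailLoss g s r u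
      ≤ ∑ u, curtailLoss g s r u := by
    simp only [← sum_mul]
    exact sum_le_sum fun u _ => mul_le_of_le_one_left (curtailLoss_nonneg hs.1 hr.1 u)
      (sum_increaseShare_le_one (s u) (r u))
  calc welfare g (s ⊔ r) - welfare g s
      = ∑ u, ∑ v, (edgeReward g (s ⊔ r) u v - edgeReward g s u v) := by
        simp only [welfare_eq_sum_edgeReward, sum_sub_distrib]
    _ ≤ ∑ u, ∑ v, (increaseShare (s u) (r u) v * curtailLoss g s r u
          + increaseShare (s v) (r v) u * curtailLoss g s r v) :=
        sum_le_sum fun u _ => sum_le_sum fun v _ => edgeReward_sup_sub_le hg hs hstable hr u v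
    _ = 2 * ∑ u, ∑ v, increaseShare (s u) (r u) v * curtailLoss g s r u := by
        simp only [sum_add_distrib]
        rw [sum_comm (f := fun u v => increaseShare (s v) (r v) u * curtailLoss g s r v), two_mul]
    _ ≤ 2 * ∑ u, curtailLoss g s r u := by gcongr

end Welfare

end NCGame

open NCGame in
theorem poa_coordinate_concave_le_two_general {g : NCGame V} (hg : IsCoordinateConcave g)
    {s : V → V → ℝ} (hs : validState g s) (hstable : IsBilaterallyStable g s)
    {r : V → V → ℝ} (hr : validState g r) :
    welfare g r ≤ 2 * welfare g s := by
  have hloss : ∑ u, curtailLoss g s r u = welfare g s - ∑ u, util g (curtail s r u) u := by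
    simp only [curtailLoss, sum_sub_distrib, welfare]
  linarith [welfare_add_le (g := g) hs.1 hr.1, welfare_sup_sub_le hg hs hstable hr]

/-- with coordinate-concave rewards, the price of anarchy for
pairwise equilibria is at most 2. -/
theorem poa_coordinate_concave_le_two (g : NCGame V)
    (hconc : ∀ u v, g.Adj u v → ∀ y, 0 ≤ y →
      ConcaveOn ℝ (Set.Ici 0) (fun x => g.f u v x y))
    (s : V → V → ℝ) (hs : IsPairwiseEq g s)
    (sStar : V → V → ℝ) (hStar : validState g sStar) :
    welfare g sStar ≤ 2 * welfare g s := by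
  exact poa_coordinate_concave_le_two_general hconc hs.1.1 hs.2 hStar
end

section
/- Suppose every reward function of a network contribution game has the form f_e(x,y) = c_e·min(x,y) with a constant c_e > 0. Then every pairwise equilibrium s satisfies w(s*) ≤ 2·w(s) for every state s*; i.e., the price of anarchy for pairwise equilibria is at most 2. -/
open Finset

variable {V : Type} [Fintype V] [DecidableEq V]

/-!
Suppose both endpoints of an edge `(u, v)` earned less than `c u v` per unit of budget. An endpoint
that moves a small fraction of its whole strategy onto the edge loses at most that fraction of its
utility and gains `c u v` for each unit its neighbour matches. So the endpoint contributing less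
would deviate alone, and two endpoints contributing equally would deviate together. Hence in a
pairwise equilibrium one endpoint of every edge earns at least `c u v` per unit of budget. Charge
the reward of the edge in the competing state to that endpoint, in proportion to the share of budget
it spends there. A player's shares add up to at most `1`, and an edge reward is counted once for
each of its two endpoints, so every player is charged at most twice its equilibrium utility.
-/

variable {g : NCGame V} {c s t : V → V → ℝ} {u v : V}

namespace NCGame

/-- The feasible strategies of player `u`: the possible rows `s u` of a valid state `s`. -/
def strategySet (g : NCGame V) (u : V) : Set (V → ℝ) :=
  {r | (∀ v, 0 ≤ r v) ∧ (∀ v, ¬ g.Adj u v → r v = 0) ∧ ∑ v, r v ≤ g.B u}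

open Classical in
/-- The neighbours of `u`, as the index set of the sum defining the utility of `u`. -/
noncomputable def neighborFinset (g : NCGame V) (u : V) : Finset V := {v | g.Adj u v}

/-- The fraction of its budget that `u` spends on the edge `(u, v)`. A player without budget
has share `0` everywhere, by `x / 0 = 0`. -/
noncomputable def budgetShare (g : NCGame V) (s : V → V → ℝ) (u v : V) : ℝ := s u v / g.B u

/-- Every edge `(u, v)` has the reward function `c u v * min x y`. The values of `c` off the edges
are irrelevant. -/
def HasMinRewards (g : NCGame V) (c : V → V → ℝ) : Prop :=
  ∀ u v, g.Adj u v → ∀ x y, g.f u v x y = c u v * min x y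

@[simp]
lemma mem_neighborFinset : v ∈ g.neighborFinset u ↔ g.Adj u v := by
  simp [neighborFinset]

lemma ne_of_adj (huv : g.Adj u v) : u ≠ v := by
  rintro rfl
  exact g.adj_irrefl u huv

lemma convex_strategySet (g : NCGame V) (u : V) : Convex ℝ (g.strategySet u) := by
  rintro r ⟨hr_nonneg, hr_supp, hr_sum⟩ q ⟨hq_nonneg, hq_supp, hq_sum⟩ a b ha hb hab
  refine ⟨fun v => ?_, fun v huv => ?_, ?_⟩
  · exact add_nonneg (mul_nonneg ha (hr_nonneg v)) (mul_nonneg hb (hq_nonneg v))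
  · simp [hr_supp v huv, hq_supp v huv]
  · calc ∑ v, (a • r + b • q) v = a * ∑ v, r v + b * ∑ v, q v := by
          simp [sum_add_distrib, mul_sum]
      _ ≤ a * g.B u + b * g.B u := by gcongr
      _ = g.B u := by rw [← add_mul, hab, one_mul]

lemma single_budget_mem_strategySet (huv : g.Adj u v) :
    Pi.single v (g.B u) ∈ g.strategySet u := by
  refine ⟨fun x => ?_, fun x hux => ?_, ?_⟩
  · exact (Pi.single_nonneg (α := fun _ => ℝ)).2 (g.B_nonneg u) x
  · have hxv : x ≠ v := by
      rintro rfl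
      exact hux huv
    exact Pi.single_eq_of_ne hxv _
  · simp

end NCGame

open NCGame

lemma validState_iff_forall_mem_strategySet : validState g s ↔ ∀ u, s u ∈ g.strategySet u := by
  simp only [validState, strategySet, Set.mem_ofPred_eq, forall_and]

namespace validState

lemma mem_strategySet (hs : validState g s) (u : V) : s u ∈ g.strategySet u :=
  validState_iff_forall_mem_strategySet.1 hs u

lemma update (hs : validState g s) {r : V → ℝ} (hr : r ∈ g.strategySet u) :
    validState g (Function.update s u r) := by
  rw [validState_iff_forall_mem_strategySet,
    Function.forall_update_iff s fun x q => q ∈ g.strategySet x]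
  exact ⟨hr, fun x _ => hs.mem_strategySet x⟩

lemma effort_le_budget (hs : validState g s) (u v : V) : s u v ≤ g.B u :=
  (single_le_sum (fun x _ => hs.1 u x) (mem_univ v)).trans (hs.2.2 u)

lemma budgetShare_nonneg (hs : validState g s) (u v : V) : 0 ≤ g.budgetShare s u v :=
  div_nonneg (hs.1 u v) (g.B_nonneg u)

lemma budgetShare_mul_budget (hs : validState g s) (u v : V) :
    g.budgetShare s u v * g.B u = s u v :=
  div_mul_cancel_of_imp fun hB => le_antisymm (hB ▸ hs.effort_le_budget u v) (hs.1 u v)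

lemma sum_budgetShare_le_one (hs : validState g s) (u : V) : ∑ v, g.budgetShare s u v ≤ 1 := by
  simp only [budgetShare, ← sum_div]
  exact div_le_one_of_le₀ (hs.2.2 u) (g.B_nonneg u)

end validState

lemma util_eq_sum_neighborFinset (g : NCGame V) (s : V → V → ℝ) (u : V) :
    util g s u = ∑ v ∈ g.neighborFinset u, g.f u v (s u v) (s v u) := by
  classical
  exact (sum_filter _ _).symm

lemma util_nonneg (hs : validState g s) (u : V) : 0 ≤ util g s u := by
  rw [util_eq_sum_neighborFinset]
  exact sum_nonneg fun v _ => g.f_nonneg _ _ _ _ (hs.1 u v) (hs.1 v u)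

lemma reward_le_util (hs : validState g s) (huv : g.Adj u v) :
    g.f u v (s u v) (s v u) ≤ util g s u := by
  rw [util_eq_sum_neighborFinset]
  exact single_le_sum (f := fun x => g.f u x (s u x) (s x u))
    (fun x _ => g.f_nonneg _ _ _ _ (hs.1 u x) (hs.1 x u)) (mem_neighborFinset.2 huv)

namespace NCGame.HasMinRewards

lemma coeff_symm (hg : g.HasMinRewards c) (huv : g.Adj u v) : c u v = c v u := by
  simpa [hg u v huv, hg v u (g.adj_symm u v huv)] using g.f_comm u v 1 1

lemma coeff_nonneg (hg : g.HasMinRewards c) (huv : g.Adj u v) : 0 ≤ c u v := by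
  simpa [hg u v huv] using g.f_nonneg u v 1 1 zero_le_one zero_le_one

lemma util_eq_sum (hg : g.HasMinRewards c) (s : V → V → ℝ) (u : V) :
    util g s u = ∑ v ∈ g.neighborFinset u, c u v * min (s u v) (s v u) := by
  rw [util_eq_sum_neighborFinset]
  exact sum_congr rfl fun v hv => hg u v (mem_neighborFinset.1 hv) _ _

lemma effort_lt_budget_of_util_lt (hg : g.HasMinRewards c) (hs : validState g s)
    (huv : g.Adj u v) (hle : s u v ≤ s v u) (hutil : util g s u < c u v * g.B u) :
    s u v < g.B u := by
  have hreward := reward_le_util hs huv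
  rw [hg u v huv, min_eq_left hle] at hreward
  exact lt_of_mul_lt_mul_left (hreward.trans_lt hutil) (hg.coeff_nonneg huv)

lemma lineMap_util_le_util (hg : g.HasMinRewards c) (hs : validState g s) (huv : g.Adj u v)
    {ε : ℝ} (hε : ε ∈ Set.Icc 0 1)
    (hrow : t u = AffineMap.lineMap (s u) (Pi.single v (g.B u)) ε)
    (hrest : ∀ x, x ≠ u → x ≠ v → t x = s x) (hmatch : t u v ≤ t v u) :
    AffineMap.lineMap (util g s u) (c u v * g.B u) ε ≤ util g t u := by
  have hmin_le_effort (x : V) : AffineMap.lineMap (min (s u x) (s x u))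
      ((Pi.single v (g.B u) : V → ℝ) x) ε ≤ t u x := by
    rw [hrow, AffineMap.pi_lineMap_apply]
    exact lineMap_mono_left (min_le_left _ _) hε.2
  have hmin_le (x : V) (hux : g.Adj u x) : AffineMap.lineMap (min (s u x) (s x u))
      ((Pi.single v (g.B u) : V → ℝ) x) ε ≤ min (t u x) (t x u) := by
    refine le_min (hmin_le_effort x) ?_
    obtain rfl | hxv := eq_or_ne x v
    · exact (hmin_le_effort x).trans hmatch
    · rw [hrest x (ne_of_adj hux).symm hxv, Pi.single_eq_of_ne hxv]
      calc AffineMap.lineMap (min (s u x) (s x u)) 0 ε ≤ min (s u x) (s x u) := by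
            rw [AffineMap.lineMap_apply_ring, mul_zero, add_zero]
            exact mul_le_of_le_one_left (le_min (hs.1 u x) (hs.1 x u)) (sub_le_self 1 hε.1)
        _ ≤ s x u := min_le_right _ _
  have hsum_single : ∑ x ∈ g.neighborFinset u, c u x * (Pi.single v (g.B u) : V → ℝ) x =
      c u v * g.B u := by
    simp [Pi.single_apply, huv]
  calc AffineMap.lineMap (util g s u) (c u v * g.B u) ε
      = ∑ x ∈ g.neighborFinset u, c u x * AffineMap.lineMap (min (s u x) (s x u))
          ((Pi.single v (g.B u) : V → ℝ) x) ε := by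
        simp only [AffineMap.lineMap_apply_ring, mul_add, sum_add_distrib, mul_left_comm (c u _),
          ← mul_sum, hsum_single, hg.util_eq_sum]
    _ ≤ ∑ x ∈ g.neighborFinset u, c u x * min (t u x) (t x u) := by
        refine sum_le_sum fun x hx => ?_
        rw [mem_neighborFinset] at hx
        exact mul_le_mul_of_nonneg_left (hmin_le x hx) (hg.coeff_nonneg hx)
    _ = util g t u := (hg.util_eq_sum t u).symm

lemma exists_strategy_util_lt (hg : g.HasMinRewards c) (hs : validState g s) (huv : g.Adj u v)
    (hutil : util g s u < c u v * g.B u) {y : ℝ} (hy : s u v < y) (hyB : y ≤ g.B u) :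
    ∃ r ∈ g.strategySet u, r v = y ∧ ∀ t : V → V → ℝ, t u = r →
      (∀ x, x ≠ u → x ≠ v → t x = s x) → y ≤ t v u → util g s u < util g t u := by
  have hslack : 0 < g.B u - s u v := sub_pos.2 (hy.trans_le hyB)
  set ε := (y - s u v) / (g.B u - s u v) with hε_def
  have hε_pos : 0 < ε := div_pos (sub_pos.2 hy) hslack
  have hε_le : ε ≤ 1 := (div_le_one hslack).2 (sub_le_sub_right hyB _)
  have hrow_v : AffineMap.lineMap (s u) (Pi.single v (g.B u)) ε v = y := by
    rw [AffineMap.pi_lineMap_apply, Pi.single_eq_same, AffineMap.lineMap_apply, vsub_eq_sub,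
      smul_eq_mul, hε_def, div_mul_cancel₀ _ hslack.ne', vadd_eq_add, sub_add_cancel]
  refine ⟨AffineMap.lineMap (s u) (Pi.single v (g.B u)) ε, ?_, hrow_v, ?_⟩
  · exact (g.convex_strategySet u).lineMap_mem (hs.mem_strategySet u)
      (single_budget_mem_strategySet huv) ⟨hε_pos.le, hε_le⟩
  · intro t hrow hrest hmatch
    calc util g s u < AffineMap.lineMap (util g s u) (c u v * g.B u) ε :=
          (left_lt_lineMap_iff_lt hε_pos).2 hutil
      _ ≤ util g t u := hg.lineMap_util_le_util hs huv ⟨hε_pos.le, hε_le⟩ hrow hrest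
          (by rwa [hrow, hrow_v])

lemma mul_budget_le_util_of_effort_lt (hg : g.HasMinRewards c) (hs : IsNashEq g s)
    (huv : g.Adj u v) (hlt : s u v < s v u) : c u v * g.B u ≤ util g s u := by
  by_contra! hutil
  have hbudget := hg.effort_lt_budget_of_util_lt hs.1 huv hlt.le hutil
  obtain ⟨r, hr, -, himp⟩ :=
    hg.exists_strategy_util_lt hs.1 huv hutil (lt_min hbudget hlt) (min_le_left _ _)
  refine (hs.2 u r (hs.1.update hr)).not_gt (himp _ ?_ ?_ ?_)
  · exact Function.update_self ..
  · exact fun x hxu _ => Function.update_of_ne hxu ..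
  · rw [Function.update_of_ne (ne_of_adj huv).symm]
    exact min_le_right _ _

lemma mul_budget_le_util_or_of_effort_eq (hg : g.HasMinRewards c) (hs : IsPairwiseEq g s)
    (huv : g.Adj u v) (heq : s u v = s v u) :
    c u v * g.B u ≤ util g s u ∨ c v u * g.B v ≤ util g s v := by
  by_contra! ⟨hutil_u, hutil_v⟩
  have hvalid := hs.1.1
  have hvu := g.adj_symm u v huv
  have hne := ne_of_adj huv
  have hbudget_u := hg.effort_lt_budget_of_util_lt hvalid huv heq.le hutil_u
  have hbudget_v := hg.effort_lt_budget_of_util_lt hvalid hvu heq.ge hutil_v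
  have hy : s u v < min (g.B u) (g.B v) := lt_min hbudget_u (heq ▸ hbudget_v)
  obtain ⟨p, hp, hpv, himp_u⟩ :=
    hg.exists_strategy_util_lt hvalid huv hutil_u hy (min_le_left _ _)
  obtain ⟨q, hq, hqu, himp_v⟩ :=
    hg.exists_strategy_util_lt hvalid hvu hutil_v (heq ▸ hy) (min_le_right _ _)
  set t := Function.update (Function.update s u p) v q with ht
  have htu : t u = p := by rw [ht, Function.update_of_ne hne, Function.update_self]
  have htv : t v = q := Function.update_self ..
  have hrest (x : V) (hxu : x ≠ u) (hxv : x ≠ v) : t x = s x := by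
    rw [ht, Function.update_of_ne hxv, Function.update_of_ne hxu]
  refine hs.2 u v p q hne ((hvalid.update hp).update hq) ⟨?_, ?_⟩
  · exact himp_u t htu hrest (by rw [htv, hqu])
  · exact himp_v t htv (fun x hxv hxu => hrest x hxu hxv) (by rw [htu, hpv])

lemma mul_budget_le_util_or (hg : g.HasMinRewards c) (hs : IsPairwiseEq g s) (huv : g.Adj u v) :
    c u v * g.B u ≤ util g s u ∨ c v u * g.B v ≤ util g s v := by
  obtain hlt | heq | hgt := lt_trichotomy (s u v) (s v u)
  · exact .inl (hg.mul_budget_le_util_of_effort_lt hs.1 huv hlt)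
  · exact hg.mul_budget_le_util_or_of_effort_eq hs huv heq
  · exact .inr (hg.mul_budget_le_util_of_effort_lt hs.1 (g.adj_symm u v huv) hgt)

section Charging

variable {w : V → ℝ}

lemma coeff_mul_min_le_budgetShare_mul (hg : g.HasMinRewards c) (ht : validState g t)
    (huv : g.Adj u v) (hcw : c u v * g.B u ≤ w u) :
    c u v * min (t u v) (t v u) ≤ g.budgetShare t u v * w u :=
  calc c u v * min (t u v) (t v u) ≤ c u v * t u v :=
        mul_le_mul_of_nonneg_left (min_le_left _ _) (hg.coeff_nonneg huv)
    _ = g.budgetShare t u v * (c u v * g.B u) := by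
        rw [mul_left_comm, ht.budgetShare_mul_budget]
    _ ≤ g.budgetShare t u v * w u := mul_le_mul_of_nonneg_left hcw (ht.budgetShare_nonneg u v)

lemma coeff_mul_min_le_add (hg : g.HasMinRewards c) (ht : validState g t) (hw : ∀ u, 0 ≤ w u)
    (huv : g.Adj u v) (hcw : c u v * g.B u ≤ w u ∨ c v u * g.B v ≤ w v) :
    c u v * min (t u v) (t v u) ≤ g.budgetShare t u v * w u + g.budgetShare t v u * w v := by
  obtain hcw | hcw := hcw
  · exact le_add_of_le_of_nonneg (hg.coeff_mul_min_le_budgetShare_mul ht huv hcw)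
      (mul_nonneg (ht.budgetShare_nonneg v u) (hw v))
  · rw [hg.coeff_symm huv, min_comm]
    exact le_add_of_nonneg_of_le (mul_nonneg (ht.budgetShare_nonneg u v) (hw u))
      (hg.coeff_mul_min_le_budgetShare_mul ht (g.adj_symm u v huv) hcw)

lemma welfare_le_two_mul_sum (hg : g.HasMinRewards c) (ht : validState g t) (hw : ∀ u, 0 ≤ w u)
    (hcw : ∀ u v, g.Adj u v → c u v * g.B u ≤ w u ∨ c v u * g.B v ≤ w v) :
    welfare g t ≤ 2 * ∑ u, w u := by
  have hcharge_nonneg (u v : V) : 0 ≤ g.budgetShare t u v * w u :=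
    mul_nonneg (ht.budgetShare_nonneg u v) (hw u)
  have hutil (u : V) : util g t u ≤
      ∑ v, (g.budgetShare t u v * w u + g.budgetShare t v u * w v) := by
    rw [hg.util_eq_sum]
    refine (sum_le_sum fun v hv => ?_).trans <| sum_le_univ_sum_of_nonneg fun v =>
      add_nonneg (hcharge_nonneg u v) (hcharge_nonneg v u)
    rw [mem_neighborFinset] at hv
    exact hg.coeff_mul_min_le_add ht hw hv (hcw u v hv)
  have hcharge (u : V) : ∑ v, g.budgetShare t u v * w u ≤ w u := by
    rw [← sum_mul]
    exact mul_le_of_le_one_left (hw u) (ht.sum_budgetShare_le_one u)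
  calc welfare g t
      ≤ ∑ u, ∑ v, (g.budgetShare t u v * w u + g.budgetShare t v u * w v) :=
        sum_le_sum fun u _ => hutil u
    _ = 2 * ∑ u, ∑ v, g.budgetShare t u v * w u := by
        simp only [sum_add_distrib]
        rw [sum_comm (f := fun u v => g.budgetShare t v u * w v), two_mul]
    _ ≤ 2 * ∑ u, w u := by
        gcongr with u
        exact hcharge u

end Charging

end NCGame.HasMinRewards

/-- with rewards `f_e(x,y) = c_e·min(x,y)`, `c_e > 0`, the price
of anarchy for pairwise equilibria is at most 2. -/
theorem poa_linear_min_le_two (g : NCGame V)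
    (c : V → V → ℝ) (hc : ∀ u v, g.Adj u v → 0 < c u v)
    (hf : ∀ u v, g.Adj u v → ∀ x y, g.f u v x y = c u v * min x y)
    (s : V → V → ℝ) (hs : IsPairwiseEq g s)
    (sStar : V → V → ℝ) (hStar : validState g sStar) :
    welfare g sStar ≤ 2 * welfare g s := by
  have hg : g.HasMinRewards c := hf
  exact hg.welfare_le_two_mul_sum hStar (util_nonneg hs.1.1)
    fun _ _ huv => hg.mul_budget_le_util_or hs huv
end

section
/- Consider a minimum effort game with uniform budgets (B_v = 1 for every player v) in which every function h_e is convex. Then a pairwise equilibrium exists. Moreover, if every h_e is strictly convex, then every pairwise equilibrium s is integral: for every edge e = (u,v), min(s_u(e), s_v(e)) ∈ {0, 1}. -/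
open Finset

variable {V : Type} [Fintype V] [DecidableEq V]

/-!
Assign to each edge its full reward, the reward when both ends spend their whole budget on it.
Convexity makes splitting unprofitable: a player earns at most the weighted average, with weights
the budget shares, of the full rewards of the edges on which the neighbour reciprocates.

For existence, match greedily along edges of largest full reward. The resulting matching has no
blocking pair, and letting matched players spend everything on each other is a pairwise
equilibrium.

For integrality, take an edge `(u, v)` of largest full reward among those with fractional minimum
effort. Since both ends spend something on it, neither spends its whole budget on another edge, so
all their rewarded edges are fractional. By strict convexity both earn strictly less than the full
reward of `(u, v)`, and would jointly deviate to it.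
-/

section StableMatching

variable {α R : Type*} [LinearOrder R] {W : α → α → R} {S : Finset α} {m : Equiv.Perm α}

/-- A stable matching of the players in `S` when the pair `{u, v}` is worth `W u v` to both of its
members: no pair in `S` is worth more to both than their current pairs. A matching is encoded as an
involution, whose fixed points are the unmatched players; such a player `u` receives `W u u`. -/
structure IsStableMatchingOn (W : α → α → R) (S : Finset α) (m : Equiv.Perm α) : Prop where
  involutive : Function.Involutive m
  apply_of_notMem : ∀ u ∉ S, m u = u
  le_or_le : ∀ u ∈ S, ∀ v ∈ S, W u v ≤ W u (m u) ∨ W u v ≤ W v (m v)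

theorem IsStableMatchingOn.swap_mul [DecidableEq α] {a b : α} (hW : ∀ u v, W u v = W v u)
    (ha : a ∈ S) (hb : b ∈ S) (hmax : ∀ u ∈ S, ∀ v ∈ S, W u v ≤ W a b)
    (hm : IsStableMatchingOn W (S \ {a, b}) m) :
    IsStableMatchingOn W S (Equiv.swap a b * m) := by
  have hma : m a = a := hm.apply_of_notMem a (by simp)
  have hmb : m b = b := hm.apply_of_notMem b (by simp)
  have apply_of_ne {x : α} (hxa : x ≠ a) (hxb : x ≠ b) : (Equiv.swap a b * m) x = m x :=
    Equiv.swap_apply_of_ne_of_ne (fun h => hxa (m.injective (h.trans hma.symm)))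
      (fun h => hxb (m.injective (h.trans hmb.symm)))
  have worth_pair {x : α} (hx : x = a ∨ x = b) : W x ((Equiv.swap a b * m) x) = W a b := by
    rcases hx with rfl | rfl
    · simp [hma]
    · simp [hmb, hW]
  refine ⟨fun x => ?_, fun x hx => ?_, fun u hu v hv => ?_⟩
  · have hdisj : (Equiv.swap a b).Disjoint m := fun x => by
      by_cases hxa : x = a
      · exact .inr (hxa ▸ hma)
      by_cases hxb : x = b
      · exact .inr (hxb ▸ hmb)
      exact .inl (Equiv.swap_apply_of_ne_of_ne hxa hxb)
    have hcomm := Equiv.congr_fun hdisj.commute.eq (m x)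
    simp only [Equiv.Perm.mul_apply, hm.involutive x] at hcomm ⊢
    rw [← hcomm, Equiv.swap_apply_self]
  · rw [apply_of_ne (ne_of_mem_of_not_mem ha hx).symm (ne_of_mem_of_not_mem hb hx).symm]
    exact hm.apply_of_notMem x (by simp [hx])
  · by_cases hu' : u = a ∨ u = b
    · exact .inl (worth_pair hu' ▸ hmax u hu v hv)
    by_cases hv' : v = a ∨ v = b
    · exact .inr (worth_pair hv' ▸ hmax u hu v hv)
    rw [not_or] at hu' hv'
    rw [apply_of_ne hu'.1 hu'.2, apply_of_ne hv'.1 hv'.2]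
    exact hm.le_or_le u (by simp [hu, hu']) v (by simp [hv, hv'])

theorem exists_isStableMatchingOn (hW : ∀ u v, W u v = W v u) (S : Finset α) :
    ∃ m, IsStableMatchingOn W S m := by
  classical
  induction S using Finset.strongInduction with
  | H S ih =>
    rcases S.eq_empty_or_nonempty with rfl | hne
    · exact ⟨1, fun _ => rfl, fun _ _ => rfl, by simp⟩
    obtain ⟨⟨a, b⟩, hab, hmax⟩ := (S ×ˢ S).exists_max_image (fun p => W p.1 p.2) (hne.product hne)
    obtain ⟨ha, hb⟩ := mem_product.1 hab
    have hsub : {a, b} ⊆ S := insert_subset ha (singleton_subset_iff.2 hb)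
    obtain ⟨m, hm⟩ := ih (S \ {a, b}) (sdiff_ssubset hsub (insert_nonempty a {b}))
    exact ⟨_, hm.swap_mul hW ha hb fun u hu v hv => hmax (u, v) (mk_mem_product hu hv)⟩

end StableMatching

section Rewards

variable {g : NCGame V} {s : V → V → ℝ} {β C : ℝ} {u v : V}

open Classical in
/-- The reward of the edge `(u, v)` in the state `s`, with value `0` on non-edges. -/
noncomputable def edgeReward (g : NCGame V) (s : V → V → ℝ) (u v : V) : ℝ :=
  if g.Adj u v then g.f u v (s u v) (s v u) else 0

/-- The reward of the edge `(u, v)` when both ends contribute `β`, with value `0` on non-edges. -/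
noncomputable def fullReward (g : NCGame V) (β : ℝ) : V → V → ℝ :=
  edgeReward g fun _ _ => β

/-- Contributing the fraction `x / β` of a budget `β` to an edge earns at most that fraction of the
full reward of the edge, whatever the other end contributes. Multiplying by `β` avoids division. -/
def HasIncreasingReturns (g : NCGame V) (β : ℝ) : Prop :=
  ∀ u v, g.Adj u v → ∀ x ∈ Set.Icc 0 β, ∀ y ∈ Set.Icc 0 β, β * g.f u v x y ≤ x * g.f u v β β

/-- The strict form of `HasIncreasingReturns`, required when the smaller of the two contributions
is neither `0` nor the whole budget `β`. -/
def HasStrictlyIncreasingReturns (g : NCGame V) (β : ℝ) : Prop :=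
  ∀ u v, g.Adj u v → ∀ x ∈ Set.Icc 0 β, ∀ y ∈ Set.Icc 0 β, min x y ∈ Set.Ioo 0 β →
    β * g.f u v x y < x * g.f u v β β

theorem edgeReward_of_adj (huv : g.Adj u v) : edgeReward g s u v = g.f u v (s u v) (s v u) :=
  if_pos huv

theorem edgeReward_of_not_adj (huv : ¬ g.Adj u v) : edgeReward g s u v = 0 :=
  if_neg huv

theorem edgeReward_comm (g : NCGame V) (s : V → V → ℝ) (u v : V) :
    edgeReward g s u v = edgeReward g s v u := by
  by_cases huv : g.Adj u v
  · rw [edgeReward_of_adj huv, edgeReward_of_adj (g.adj_symm u v huv), g.f_comm, g.f_symm]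
  · rw [edgeReward_of_not_adj huv, edgeReward_of_not_adj (mt (g.adj_symm v u) huv)]

theorem edgeReward_nonneg (hs : ∀ u v, 0 ≤ s u v) (u v : V) : 0 ≤ edgeReward g s u v := by
  by_cases huv : g.Adj u v
  · exact edgeReward_of_adj huv ▸ g.f_nonneg u v _ _ (hs u v) (hs v u)
  · exact (edgeReward_of_not_adj huv).ge

theorem fullReward_of_adj (huv : g.Adj u v) : fullReward g β u v = g.f u v β β :=
  edgeReward_of_adj huv

theorem fullReward_comm (g : NCGame V) (β : ℝ) (u v : V) :
    fullReward g β u v = fullReward g β v u :=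
  edgeReward_comm g _ u v

theorem fullReward_nonneg (hβ : 0 ≤ β) (u v : V) : 0 ≤ fullReward g β u v :=
  edgeReward_nonneg (fun _ _ => hβ) u v

theorem util_eq_sum_edgeReward (g : NCGame V) (s : V → V → ℝ) (u : V) :
    util g s u = ∑ v, edgeReward g s u v :=
  rfl

theorem edgeReward_le_util (hs : validState g s) (u v : V) : edgeReward g s u v ≤ util g s u :=
  single_le_sum (fun x _ => edgeReward_nonneg hs.1 u x) (mem_univ v)

theorem fullReward_le_util (hs : validState g s) (huv : s u v = β) (hvu : s v u = β) :
    fullReward g β u v ≤ util g s u := by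
  refine le_of_eq_of_le ?_ (edgeReward_le_util hs u v)
  simp only [fullReward, edgeReward, huv, hvu]

theorem validState.add_le_budget (hs : validState g s) {x : V} (hvx : v ≠ x) :
    s u v + s u x ≤ g.B u := by
  rw [← sum_pair hvx]
  exact (sum_le_univ_sum_of_nonneg (hs.1 u)).trans (hs.2.2 u)

theorem validState.mem_Icc_budget (hs : validState g s) (u v : V) : s u v ∈ Set.Icc 0 (g.B u) :=
  ⟨hs.1 u v, (single_le_sum (fun x _ => hs.1 u x) (mem_univ v)).trans (hs.2.2 u)⟩

theorem util_le_of_mul_edgeReward_le (hβ : 0 < β) (hu : ∑ v, s u v ≤ β) (hC : 0 ≤ C)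
    (hle : ∀ v, β * edgeReward g s u v ≤ s u v * C) : util g s u ≤ C := by
  refine le_of_mul_le_mul_left ?_ hβ
  calc β * util g s u = ∑ v, β * edgeReward g s u v := by
        rw [util_eq_sum_edgeReward, mul_sum]
    _ ≤ ∑ v, s u v * C := sum_le_sum fun v _ => hle v
    _ = (∑ v, s u v) * C := (sum_mul ..).symm
    _ ≤ β * C := mul_le_mul_of_nonneg_right hu hC

theorem util_lt_of_mul_edgeReward_lt (hβ : 0 < β) (hu : ∑ v, s u v ≤ β) (hC : 0 ≤ C)
    (hle : ∀ v, β * edgeReward g s u v ≤ s u v * C)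
    (hlt : ∃ v, β * edgeReward g s u v < s u v * C) : util g s u < C := by
  refine lt_of_mul_lt_mul_left ?_ hβ.le
  calc β * util g s u = ∑ v, β * edgeReward g s u v := by
        rw [util_eq_sum_edgeReward, mul_sum]
    _ < ∑ v, s u v * C := sum_lt_sum (fun v _ => hle v) (hlt.imp fun v hv => ⟨mem_univ v, hv⟩)
    _ = (∑ v, s u v) * C := (sum_mul ..).symm
    _ ≤ β * C := mul_le_mul_of_nonneg_right hu hC

theorem mul_edgeReward_le (hB : ∀ v, g.B v = β) (hr : HasIncreasingReturns g β)
    (hs : validState g s) (u v : V) :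
    β * edgeReward g s u v ≤ s u v * fullReward g β u v := by
  by_cases huv : g.Adj u v
  · rw [edgeReward_of_adj huv, fullReward_of_adj huv]
    exact hr u v huv _ (hB u ▸ hs.mem_Icc_budget u v) _ (hB v ▸ hs.mem_Icc_budget v u)
  · simp only [fullReward, edgeReward_of_not_adj huv, mul_zero, le_refl]

theorem edgeReward_eq_zero_of_right (hβ : 0 < β) (hB : ∀ v, g.B v = β)
    (hr : HasIncreasingReturns g β) (hs : validState g s) (hvu : s v u = 0) :
    edgeReward g s u v = 0 := by
  refine le_antisymm (nonpos_of_mul_nonpos_right ?_ hβ) (edgeReward_nonneg hs.1 u v)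
  simpa only [hvu, zero_mul, edgeReward_comm g s v u] using mul_edgeReward_le hB hr hs v u

end Rewards

section Existence

variable {g : NCGame V} {β : ℝ} {m : Equiv.Perm V}

open Classical in
/-- The state in which players matched by `m` along an edge contribute `β` to that edge, and no
other effort is made. -/
noncomputable def matchingState (g : NCGame V) (β : ℝ) (m : Equiv.Perm V) (u v : V) : ℝ :=
  if m u = v ∧ g.Adj u v then β else 0

theorem matchingState_comm (hm : Function.Involutive m) (u v : V) :
    matchingState g β m u v = matchingState g β m v u := by
  classical
  have hadj : g.Adj u v ↔ g.Adj v u := ⟨g.adj_symm u v, g.adj_symm v u⟩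
  have hmatch : m u = v ↔ m v = u := hm.eq_iff.trans eq_comm
  exact if_congr (and_congr hmatch hadj) rfl rfl

theorem matchingState_of_ne {u v : V} (huv : m u ≠ v) : matchingState g β m u v = 0 :=
  if_neg fun h => huv h.1

theorem validState_matchingState (hβ : 0 ≤ β) (hB : ∀ v, g.B v = β) (m : Equiv.Perm V) :
    validState g (matchingState g β m) := by
  refine ⟨fun u v => ?_, fun u v huv => if_neg fun h => huv h.2, fun u => ?_⟩
  · unfold matchingState
    positivity
  · rw [sum_eq_single (m u) (fun v _ hv => matchingState_of_ne hv.symm) (by simp), hB,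
      matchingState]
    split_ifs
    exacts [le_rfl, hβ]

theorem fullReward_le_util_matchingState (hβ : 0 ≤ β) (hB : ∀ v, g.B v = β)
    (hm : Function.Involutive m) (u : V) :
    fullReward g β u (m u) ≤ util g (matchingState g β m) u := by
  have hs := validState_matchingState hβ hB m
  by_cases hu : g.Adj u (m u)
  · have hfull : matchingState g β m u (m u) = β := if_pos ⟨rfl, hu⟩
    exact fullReward_le_util hs hfull (matchingState_comm hm u (m u) ▸ hfull)
  · rw [fullReward, edgeReward_of_not_adj hu]
    exact sum_nonneg fun v _ => edgeReward_nonneg hs.1 u v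

theorem util_le_max_of_eq_matchingState (hβ : 0 < β) (hB : ∀ v, g.B v = β)
    (hr : HasIncreasingReturns g β) (hm : Function.Involutive m) {s : V → V → ℝ}
    (hs : validState g s) {u v : V} (heq : ∀ x, x ≠ u → x ≠ v → s x = matchingState g β m x) :
    util g s u ≤ max (fullReward g β u v) (fullReward g β u (m u)) := by
  have hmax : 0 ≤ max (fullReward g β u v) (fullReward g β u (m u)) :=
    le_max_of_le_left (fullReward_nonneg hβ.le u v)
  refine util_le_of_mul_edgeReward_le hβ (hB u ▸ hs.2.2 u) hmax fun x => ?_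
  have bound_of_le (hx : fullReward g β u x ≤ max (fullReward g β u v) (fullReward g β u (m u))) :
      β * edgeReward g s u x ≤ s u x * max (fullReward g β u v) (fullReward g β u (m u)) :=
    (mul_edgeReward_le hB hr hs u x).trans (mul_le_mul_of_nonneg_left hx (hs.1 u x))
  by_cases hxv : x = v
  · exact bound_of_le (hxv ▸ le_max_left ..)
  by_cases hxm : x = m u
  · exact bound_of_le (hxm ▸ le_max_right ..)
  suffices hreward : edgeReward g s u x = 0 by
    rw [hreward, mul_zero]
    exact mul_nonneg (hs.1 u x) hmax
  by_cases hxu : x = u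
  · exact edgeReward_of_not_adj (hxu ▸ g.adj_irrefl u)
  · refine edgeReward_eq_zero_of_right hβ hB hr hs ?_
    rw [heq x hxu hxv, matchingState_comm hm, matchingState_of_ne (Ne.symm hxm)]

theorem isPairwiseEq_matchingState (hβ : 0 < β) (hB : ∀ v, g.B v = β)
    (hr : HasIncreasingReturns g β) (hm : IsStableMatchingOn (fullReward g β) univ m) :
    IsPairwiseEq g (matchingState g β m) := by
  have hge := fullReward_le_util_matchingState hβ.le hB hm.involutive
  refine ⟨⟨validState_matchingState hβ.le hB m, fun u t ht => ?_⟩, ?_⟩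
  · have hloop : fullReward g β u u ≤ fullReward g β u (m u) :=
      (edgeReward_of_not_adj (g.adj_irrefl u)).trans_le (fullReward_nonneg hβ.le u (m u))
    have hdev := util_le_max_of_eq_matchingState hβ hB hr hm.involutive ht
      (u := u) (v := u) fun x hx _ => Function.update_of_ne hx ..
    exact hdev.trans ((max_le hloop le_rfl).trans (hge u))
  · rintro u v tu tv - ht ⟨hu, hv⟩
    have hdevu := util_le_max_of_eq_matchingState hβ hB hr hm.involutive ht
      (u := u) (v := v) fun x hxu hxv => by simp [hxu, hxv]
    have hdevv := util_le_max_of_eq_matchingState hβ hB hr hm.involutive ht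
      (u := v) (v := u) fun x hxv hxu => by simp [hxu, hxv]
    have hblocku : fullReward g β u (m u) < fullReward g β u v := by
      simpa using (hge u).trans_lt (hu.trans_le hdevu)
    have hblockv : fullReward g β v (m v) < fullReward g β u v := by
      simpa [fullReward_comm g β v u] using (hge v).trans_lt (hv.trans_le hdevv)
    exact (hm.le_or_le u (mem_univ u) v (mem_univ v)).elim hblocku.not_ge hblockv.not_ge

end Existence

section Integrality

variable {g : NCGame V} {s : V → V → ℝ} {β : ℝ} {u v : V}

theorem validState.update_single (hs : validState g s) (huv : g.Adj u v) :
    validState g (Function.update s u (Pi.single v (g.B u))) := by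
  have hsingle : 0 ≤ (Pi.single v (g.B u) : V → ℝ) := Pi.single_nonneg.2 (g.B_nonneg u)
  refine ⟨fun x y => ?_, fun x y hxy => ?_, fun x => ?_⟩ <;>
    rcases eq_or_ne x u with rfl | hxu
  · simpa using hsingle y
  · simpa [hxu] using hs.1 x y
  · have hyv : y ≠ v := fun h => hxy (h ▸ huv)
    simp [hyv]
  · simpa [hxu] using hs.2.1 x y hxy
  · simp
  · simpa [hxu] using hs.2.2 x

theorem IsPairwiseEq.not_util_lt_fullReward (hB : ∀ v, g.B v = β) (hs : IsPairwiseEq g s)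
    (huv : g.Adj u v) :
    ¬ (util g s u < fullReward g β u v ∧ util g s v < fullReward g β v u) := by
  rintro ⟨hu, hv⟩
  have hne : u ≠ v := fun h => g.adj_irrefl v (h ▸ huv)
  have hvalid := (hs.1.1.update_single huv).update_single (g.adj_symm u v huv)
  rw [hB, hB] at hvalid
  exact hs.2 u v _ _ hne hvalid ⟨hu.trans_le (fullReward_le_util hvalid (by simp [hne]) (by simp)),
    hv.trans_le (fullReward_le_util hvalid (by simp) (by simp [hne]))⟩

/-- The edge `(u, v)` has a minimum effort strictly between `0` and the budget `β`. -/
def IsFractionalEdge (g : NCGame V) (s : V → V → ℝ) (β : ℝ) (u v : V) : Prop :=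
  g.Adj u v ∧ min (s u v) (s v u) ∈ Set.Ioo 0 β

theorem IsFractionalEdge.symm (huv : IsFractionalEdge g s β u v) : IsFractionalEdge g s β v u :=
  ⟨g.adj_symm u v huv.1, min_comm (s u v) (s v u) ▸ huv.2⟩

theorem IsFractionalEdge.of_pos (hB : ∀ v, g.B v = β) (hs : validState g s)
    (huv : IsFractionalEdge g s β u v) {x : V} (hux : 0 < s u x) (hxu : 0 < s x u) :
    IsFractionalEdge g s β u x := by
  rcases eq_or_ne x v with rfl | hxv
  · exact huv
  have hadj : g.Adj u x := by_contra fun h => hux.ne' (hs.2.1 u x h)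
  have hbudget : s u x + s u v ≤ β := hB u ▸ hs.add_le_budget hxv
  have huv_pos : 0 < s u v := (lt_min_iff.1 huv.2.1).1
  exact ⟨hadj, lt_min hux hxu, (min_le_left ..).trans_lt (by linarith)⟩

theorem IsFractionalEdge.util_lt_fullReward (hB : ∀ v, g.B v = β)
    (hr : HasIncreasingReturns g β) (hr' : HasStrictlyIncreasingReturns g β)
    (hs : validState g s) (huv : IsFractionalEdge g s β u v)
    (hmax : ∀ x, IsFractionalEdge g s β u x → fullReward g β u x ≤ fullReward g β u v) :
    util g s u < fullReward g β u v := by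
  have hβ : 0 < β := huv.2.1.trans huv.2.2
  have hfull : 0 ≤ fullReward g β u v := fullReward_nonneg hβ.le u v
  refine util_lt_of_mul_edgeReward_lt hβ (hB u ▸ hs.2.2 u) hfull (fun x => ?_) ⟨v, ?_⟩
  · rcases (hs.1 u x).eq_or_lt' with hux | hux
    · rw [edgeReward_comm, edgeReward_eq_zero_of_right hβ hB hr hs hux, hux, mul_zero, zero_mul]
    rcases (hs.1 x u).eq_or_lt' with hxu | hxu
    · rw [edgeReward_eq_zero_of_right hβ hB hr hs hxu, mul_zero]
      exact mul_nonneg hux.le hfull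
    calc β * edgeReward g s u x ≤ s u x * fullReward g β u x := mul_edgeReward_le hB hr hs u x
      _ ≤ s u x * fullReward g β u v :=
        mul_le_mul_of_nonneg_left (hmax x (huv.of_pos hB hs hux hxu)) hux.le
  · rw [edgeReward_of_adj huv.1, fullReward_of_adj huv.1]
    exact hr' u v huv.1 _ (hB u ▸ hs.mem_Icc_budget u v) _ (hB v ▸ hs.mem_Icc_budget v u) huv.2

theorem IsPairwiseEq.not_isFractionalEdge (hB : ∀ v, g.B v = β)
    (hr : HasIncreasingReturns g β) (hr' : HasStrictlyIncreasingReturns g β)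
    (hs : IsPairwiseEq g s) (u v : V) : ¬ IsFractionalEdge g s β u v := by
  intro huv
  obtain ⟨⟨a, b⟩, hab, hmax⟩ := Set.exists_max_image {p : V × V | IsFractionalEdge g s β p.1 p.2}
    (fun p => fullReward g β p.1 p.2) (Set.toFinite _) ⟨(u, v), huv⟩
  refine hs.not_util_lt_fullReward hB hab.1
    ⟨hab.util_lt_fullReward hB hr hr' hs.1.1 fun x hx => hmax (a, x) hx,
      hab.symm.util_lt_fullReward hB hr hr' hs.1.1 fun x hx => ?_⟩
  rw [fullReward_comm g β b a]
  exact hmax (b, x) hx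

theorem IsPairwiseEq.min_eq_zero_or_eq (hB : ∀ v, g.B v = β)
    (hr : HasIncreasingReturns g β) (hr' : HasStrictlyIncreasingReturns g β)
    (hs : IsPairwiseEq g s) (huv : g.Adj u v) :
    min (s u v) (s v u) = 0 ∨ min (s u v) (s v u) = β := by
  have hu : s u v ∈ Set.Icc 0 β := hB u ▸ hs.1.1.mem_Icc_budget u v
  have hv : 0 ≤ s v u := hs.1.1.1 v u
  by_contra! h
  exact hs.not_isFractionalEdge hB hr hr' u v
    ⟨huv, (le_min hu.1 hv).lt_of_ne' h.1, (min_le_of_left_le hu.2).lt_of_ne h.2⟩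

end Integrality

section MinimumEffort

theorem mul_le_mul_of_convexOn {𝕜 : Type*} [Field 𝕜] [LinearOrder 𝕜] [IsStrictOrderedRing 𝕜]
    {D : Set 𝕜} {φ : 𝕜 → 𝕜} {x y : 𝕜} (hφ : ConvexOn 𝕜 D φ) (h0D : 0 ∈ D) (hyD : y ∈ D)
    (hφ0 : φ 0 = 0) (hx : 0 ≤ x) (hxy : x ≤ y) : y * φ x ≤ x * φ y := by
  have hxD : x ∈ D := hφ.1.ordConnected.out h0D hyD ⟨hx, hxy⟩
  rcases hx.eq_or_lt with rfl | hx
  · simp [hφ0]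
  have hy := hx.trans_le hxy
  have hsecant := hφ.secant_mono h0D hxD hyD hx.ne' hy.ne' hxy
  rwa [hφ0, sub_zero, sub_zero, sub_zero, sub_zero, div_le_div_iff₀ hx hy, mul_comm,
    mul_comm (φ y)] at hsecant

theorem mul_lt_mul_of_strictConvexOn {𝕜 : Type*} [Field 𝕜] [LinearOrder 𝕜]
    [IsStrictOrderedRing 𝕜] {D : Set 𝕜} {φ : 𝕜 → 𝕜} {x y : 𝕜} (hφ : StrictConvexOn 𝕜 D φ)
    (h0D : 0 ∈ D) (hyD : y ∈ D) (hφ0 : φ 0 = 0) (hx : 0 < x) (hxy : x < y) :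
    y * φ x < x * φ y := by
  have hxD : x ∈ D := hφ.1.ordConnected.out h0D hyD ⟨hx.le, hxy.le⟩
  have hy := hx.trans hxy
  have hsecant := hφ.secant_strict_mono h0D hxD hyD hx.ne' hy.ne' hxy
  rwa [hφ0, sub_zero, sub_zero, sub_zero, sub_zero, div_lt_div_iff₀ hx hy, mul_comm,
    mul_comm (φ y)] at hsecant

variable {g : NCGame V} {β : ℝ} {h : V → V → ℝ → ℝ}

theorem hasIncreasingReturns_of_convexOn (hβ : 0 ≤ β)
    (hmin : ∀ u v, g.Adj u v → ∀ x y, g.f u v x y = h u v (min x y))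
    (h0 : ∀ u v, g.Adj u v → h u v 0 = 0)
    (hconv : ∀ u v, g.Adj u v → ConvexOn ℝ (Set.Ici 0) (h u v)) : HasIncreasingReturns g β := by
  intro u v huv x hx y hy
  have hxy : 0 ≤ min x y := le_min hx.1 hy.1
  calc β * g.f u v x y = β * h u v (min x y) := by rw [hmin u v huv]
    _ ≤ min x y * h u v β := mul_le_mul_of_convexOn (hconv u v huv) Set.self_mem_Ici hβ
        (h0 u v huv) hxy (min_le_of_left_le hx.2)
    _ = min x y * g.f u v β β := by rw [hmin u v huv, min_self]
    _ ≤ x * g.f u v β β :=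
        mul_le_mul_of_nonneg_right (min_le_left x y) (g.f_nonneg u v β β hβ hβ)

theorem hasStrictlyIncreasingReturns_of_strictConvexOn
    (hmin : ∀ u v, g.Adj u v → ∀ x y, g.f u v x y = h u v (min x y))
    (h0 : ∀ u v, g.Adj u v → h u v 0 = 0)
    (hconv : ∀ u v, g.Adj u v → StrictConvexOn ℝ (Set.Ici 0) (h u v)) :
    HasStrictlyIncreasingReturns g β := by
  intro u v huv x hx y _ hxy
  have hβ : 0 ≤ β := hx.1.trans hx.2
  calc β * g.f u v x y = β * h u v (min x y) := by rw [hmin u v huv]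
    _ < min x y * h u v β := mul_lt_mul_of_strictConvexOn (hconv u v huv) Set.self_mem_Ici
        hβ (h0 u v huv) hxy.1 hxy.2
    _ = min x y * g.f u v β β := by rw [hmin u v huv, min_self]
    _ ≤ x * g.f u v β β :=
        mul_le_mul_of_nonneg_right (min_le_left x y) (g.f_nonneg u v β β hβ hβ)

end MinimumEffort

theorem min_effort_convex_uniform_exists_general {g : NCGame V} {β : ℝ} (hβ : 0 < β)
    (hB : ∀ v, g.B v = β) (hr : HasIncreasingReturns g β) :
    (∃ s, IsPairwiseEq g s) ∧
    (HasStrictlyIncreasingReturns g β → ∀ s, IsPairwiseEq g s → ∀ u v, g.Adj u v →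
      min (s u v) (s v u) = 0 ∨ min (s u v) (s v u) = β) := by
  refine ⟨?_, fun hr' s hs u v huv => hs.min_eq_zero_or_eq hB hr hr' huv⟩
  obtain ⟨m, hm⟩ := exists_isStableMatchingOn (fullReward_comm g β) univ
  exact ⟨_, isPairwiseEq_matchingState hβ hB hr hm⟩

/-- minimum effort games with uniform budgets and convex `h_e`
possess a pairwise equilibrium; with strictly convex `h_e` every pairwise
equilibrium is integral. -/
theorem min_effort_convex_uniform_exists (g : NCGame V)
    (hB : ∀ v, g.B v = 1)
    (h : V → V → ℝ → ℝ)
    (hmin : ∀ u v, g.Adj u v → ∀ x y, g.f u v x y = h u v (min x y))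
    (hmono : ∀ u v, g.Adj u v → MonotoneOn (h u v) (Set.Ici 0))
    (h0 : ∀ u v, g.Adj u v → h u v 0 = 0)
    (hconv : ∀ u v, g.Adj u v → ConvexOn ℝ (Set.Ici 0) (h u v)) :
    (∃ s, IsPairwiseEq g s) ∧
    ((∀ u v, g.Adj u v → StrictConvexOn ℝ (Set.Ici 0) (h u v)) →
      ∀ s, IsPairwiseEq g s → ∀ u v, g.Adj u v →
        min (s u v) (s v u) = 0 ∨ min (s u v) (s v u) = 1) := by
  have hr := hasIncreasingReturns_of_convexOn zero_le_one hmin h0 hconv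
  exact (min_effort_convex_uniform_exists_general one_pos hB hr).imp_right fun hint hstrict =>
    hint (hasStrictlyIncreasingReturns_of_strictConvexOn hmin h0 hstrict)
end

section
/- Consider a maximum effort game. If in a state s some pair of adjacent players u, v has a bilateral deviation that strictly increases both of their utilities, then at least one of these two players already has a unilateral deviation in s that strictly increases its own utility. Equivalently, every Nash equilibrium of a maximum effort game is a pairwise equilibrium. -/
open Finset

variable {V : Type} [Fintype V] [DecidableEq V]

/-!
Let `u` and `v` jointly move from `s` to `s'`. The reward of their common edge in `s'` is
determined by the larger of their two efforts there; say it is `u`'s. If `u` alone moves to its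
strategy in `s'`, then `v`'s effort on the common edge stays at its value in `s`, which cannot push
the maximum below `u`'s new effort, and no other edge at `u` sees `v`'s strategy. So `u` gets at
least its utility in `s'`.
-/

/-- A reward function that depends only on the larger of the two efforts. Efforts are nonnegative,
so nothing is asked of negative arguments. -/
def IsMaxEffortReward (f : ℝ → ℝ → ℝ) : Prop :=
  ∃ h : ℝ → ℝ, ∀ x y, 0 ≤ x → 0 ≤ y → f x y = h (max x y)

/-- Player `v` can strictly increase its utility in `s` by changing only its own strategy: the
situation that a Nash equilibrium excludes. -/
def HasImprovingDeviation (g : NCGame V) (s : V → V → ℝ) (v : V) : Prop :=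
  ∃ t : V → ℝ, validState g (Function.update s v t) ∧
    util g s v < util g (Function.update s v t) v

theorem update_update_of_ne_of_ne {α β : Type*} [DecidableEq α] {a b : α} (f : α → β) (x y : β)
    (c : α) (hca : c ≠ a) (hcb : c ≠ b) :
    Function.update (Function.update f a x) b y c = f c := by
  rw [Function.update_of_ne hcb, Function.update_of_ne hca]

theorem IsMaxEffortReward.eq_of_le {f : ℝ → ℝ → ℝ} (hf : IsMaxEffortReward f) {x y z : ℝ}
    (hy : 0 ≤ y) (hz : 0 ≤ z) (hyx : y ≤ x) (hzx : z ≤ x) : f x y = f x z := by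
  obtain ⟨h, hfh⟩ := hf
  have hx : 0 ≤ x := hy.trans hyx
  rw [hfh x y hx hy, hfh x z hx hz, max_eq_left hyx, max_eq_left hzx]

section

variable {g : NCGame V} {s s' : V → V → ℝ} {u v : V}

theorem NCGame.f_monotoneOn_right (g : NCGame V) (u v : V) {x : ℝ} (hx : 0 ≤ x) :
    MonotoneOn (g.f u v x) (Set.Ici 0) := by
  simpa only [g.f_symm u v _ x] using g.f_mono u v x hx

theorem NCGame.f_le_f_of_le (hmax : IsMaxEffortReward (g.f u v)) {x y z : ℝ}
    (hy : 0 ≤ y) (hz : 0 ≤ z) (hyx : y ≤ x) : g.f u v x y ≤ g.f u v x z := by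
  have hx : 0 ≤ x := hy.trans hyx
  calc
    g.f u v x y = g.f u v x 0 := hmax.eq_of_le hy le_rfl hyx hx
    _ ≤ g.f u v x z := g.f_monotoneOn_right u v hx Set.self_mem_Ici hz hz

theorem validState.update_strategy (hs : validState g s) (hs' : validState g s') (v : V) :
    validState g (Function.update s v (s' v)) := by
  have strategy_eq (w : V) :
      Function.update s v (s' v) w = s w ∨ Function.update s v (s' v) w = s' w := by
    obtain rfl | hw := eq_or_ne w v
    · exact .inr (Function.update_self ..)
    · exact .inl (Function.update_of_ne hw ..)
  obtain ⟨nonneg, supported, budget⟩ := hs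
  obtain ⟨nonneg', supported', budget'⟩ := hs'
  refine ⟨fun w => ?_, fun w => ?_, fun w => ?_⟩ <;>
    obtain hw | hw := strategy_eq w <;> rw [hw]
  exacts [nonneg w, nonneg' w, supported w, supported' w, budget w, budget' w]

theorem util_le_util_update_of_le (hs : validState g s) (hs' : validState g s')
    (hmax : g.Adj u v → IsMaxEffortReward (g.f u v))
    (hss' : ∀ w, w ≠ u → w ≠ v → s' w = s w) (hle : s' v u ≤ s' u v) :
    util g s' u ≤ util g (Function.update s u (s' u)) u := by
  refine Finset.sum_le_sum fun w _ => ?_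
  split_ifs with huw
  · have hwu : w ≠ u := fun hwu => g.adj_irrefl u (hwu ▸ huw)
    rw [Function.update_self, Function.update_of_ne hwu]
    obtain rfl | hwv := eq_or_ne w v
    · exact g.f_le_f_of_le (hmax huw) (hs'.1 w u) (hs.1 w u) hle
    · rw [hss' w hwu hwv]
  · exact le_rfl

theorem hasImprovingDeviation_of_le (hs : validState g s) (hs' : validState g s')
    (hmax : g.Adj u v → IsMaxEffortReward (g.f u v))
    (hss' : ∀ w, w ≠ u → w ≠ v → s' w = s w) (hle : s' v u ≤ s' u v)
    (hu : util g s u < util g s' u) : HasImprovingDeviation g s u :=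
  ⟨s' u, hs.update_strategy hs' u, hu.trans_le (util_le_util_update_of_le hs hs' hmax hss' hle)⟩

theorem max_effort_bilateral_implies_unilateral_general
    (hmax : g.Adj u v → IsMaxEffortReward (g.f u v))
    (hs : validState g s) (hs' : validState g s') (hss' : ∀ w, w ≠ u → w ≠ v → s' w = s w)
    (hu : util g s u < util g s' u) (hv : util g s v < util g s' v) :
    HasImprovingDeviation g s u ∨ HasImprovingDeviation g s v := by
  obtain hle | hle := le_total (s' v u) (s' u v)
  · exact .inl (hasImprovingDeviation_of_le hs hs' hmax hss' hle hu)
  · have hmax' (hvu : g.Adj v u) : IsMaxEffortReward (g.f v u) := by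
      have reward_comm : g.f v u = g.f u v := funext₂ (g.f_comm v u)
      exact reward_comm ▸ hmax (g.adj_symm v u hvu)
    exact .inr (hasImprovingDeviation_of_le hs hs' hmax' (fun w hwv hwu => hss' w hwu hwv) hle hv)

theorem IsNashEq.not_hasImprovingDeviation (hs : IsNashEq g s) (v : V) :
    ¬ HasImprovingDeviation g s v :=
  fun ⟨t, ht, hlt⟩ => (hs.2 v t ht).not_gt hlt

theorem IsNashEq.isPairwiseEq (hs : IsNashEq g s)
    (hmax : ∀ u v, g.Adj u v → IsMaxEffortReward (g.f u v)) : IsPairwiseEq g s := by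
  refine ⟨hs, fun u v tu tv _ hs' ⟨hu, hv⟩ => ?_⟩
  exact (max_effort_bilateral_implies_unilateral_general (hmax u v) hs.1 hs'
    (update_update_of_ne_of_ne s tu tv) hu hv).elim
    (hs.not_hasImprovingDeviation u) (hs.not_hasImprovingDeviation v)

end

/-- in maximum effort games, any improving bilateral deviation of
a pair of adjacent players yields an improving unilateral deviation for one of
them; equivalently, every Nash equilibrium is a pairwise equilibrium. -/
theorem max_effort_bilateral_implies_unilateral (g : NCGame V)
    (h : V → V → ℝ → ℝ)
    (hmax : ∀ u v, g.Adj u v → ∀ x y, g.f u v x y = h u v (max x y))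
    (hmono : ∀ u v, g.Adj u v → MonotoneOn (h u v) (Set.Ici 0)) :
    (∀ s, validState g s → ∀ u v, g.Adj u v → ∀ (tu tv : V → ℝ),
      validState g (Function.update (Function.update s u tu) v tv) →
      util g s u < util g (Function.update (Function.update s u tu) v tv) u →
      util g s v < util g (Function.update (Function.update s u tu) v tv) v →
      (∃ t, validState g (Function.update s u t) ∧
        util g s u < util g (Function.update s u t) u) ∨
      (∃ t, validState g (Function.update s v t) ∧
        util g s v < util g (Function.update s v t) v)) ∧
    (∀ s, IsNashEq g s → IsPairwiseEq g s) := by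
  have hreward (u v : V) (huv : g.Adj u v) : IsMaxEffortReward (g.f u v) :=
    ⟨h u v, fun x y _ _ => hmax u v huv x y⟩
  exact ⟨fun s hs u v _ tu tv hs' => max_effort_bilateral_implies_unilateral_general (hreward u v)
    hs hs' (update_update_of_ne_of_ne s tu tv), fun s hs => hs.isPairwiseEq hreward⟩
end
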